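/- arXiv:2301.02014 — 5 statements merged into one kernel-verified Lean document; each statement's English description precedes it below -/
import Mathlib

section
/- Fix an integer k ≥ 1 and C = (c_0,…,c_k) with each c_p ∈ {0,1}. For every n ≥ 1 and every integer m with 1 ≤ m ≤ n, O_C(n, m + c_k − 1) = ((n−1)!)^k · Σ_T (Π_{j∈T} F_j(C)) · (Π_{j∈{2,…,n}∖T} F_j(C′)), where the sum ranges over all subsets T of {2,…,n} with |T| = m − 1. -/
open Finset

/-- `i` is a left-to-right minimum of the permutation `σ`. -/
def IsLTRMin {n : ℕ} (σ : Equiv.Perm (Fin n)) (i : Fin n) : Prop :=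
  ∀ i' : Fin n, i' < i → σ i < σ i'

instance {n : ℕ} (σ : Equiv.Perm (Fin n)) : DecidablePred (IsLTRMin σ) := fun i =>
  inferInstanceAs (Decidable (∀ i' : Fin n, i' < i → σ i < σ i'))

/-- `l(i)`: the number of `w` such that `i` is a left-to-right minimum of `σs w`. -/
def ltrCount {n k : ℕ} (σs : Fin k → Equiv.Perm (Fin n)) (i : Fin n) : ℕ :=
  (univ.filter fun w => IsLTRMin (σs w) i).card

/-- `O_C(n, m)`: the number of `k`-tuples of permutations of `{1,…,n}` such that exactly `m`
indices `i` satisfy `c (l i) = 1`. -/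
def Oseq (k : ℕ) (c : ℕ → ℕ) (n m : ℕ) : ℕ :=
  ((univ : Finset (Fin k → Equiv.Perm (Fin n))).filter fun σs =>
    (univ.filter fun i : Fin n => c (ltrCount σs i) = 1).card = m).card

/-- `F_j(C) = ∑_{p=0}^k c_p · binom(k,p) / (j-1)^p`. -/
noncomputable def Fc (k : ℕ) (c : ℕ → ℕ) (j : ℕ) : ℝ :=
  ∑ p ∈ Finset.range (k + 1), (c p : ℝ) * (k.choose p : ℝ) / ((j - 1 : ℕ) : ℝ) ^ p

/-
A permutation of `{1, …, n + 1}` amounts to its last value `a` together with the relative order of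
the remaining values. The first `n` indices keep their status as left-to-right minima, and the last
one is a left-to-right minimum iff `a` is the smallest value. Hence the numbers `l(1), …, l(n)` of a
uniformly random `k`-tuple are independent, `l(j)` being binomial with parameters `k` and `1 / j`:
the generating polynomial of `O_C(n, ·)` is a product over `j` of polynomials that are linear in
`X`, with factor `X ^ c_k` at `j = 1` and `(j - 1) ^ k * (F_j(C) X + F_j(C'))` at `j ≥ 2`.
-/

section InsertLast

variable {n : ℕ}

/-- The permutation of `Fin (n + 1)` with last value `a` whose other values are in the same relative
order as those of `τ`. Adding a last entry in this way is the inductive step for left-to-right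
minima. -/
def insertLast (a : Fin (n + 1)) (τ : Equiv.Perm (Fin n)) : Equiv.Perm (Fin (n + 1)) :=
  (finSuccEquivLast.trans τ.optionCongr).trans (finSuccEquiv' a).symm

@[simp]
lemma insertLast_last (a : Fin (n + 1)) (τ : Equiv.Perm (Fin n)) :
    insertLast a τ (Fin.last n) = a := by
  simp [insertLast]

@[simp]
lemma insertLast_castSucc (a : Fin (n + 1)) (τ : Equiv.Perm (Fin n)) (i : Fin n) :
    insertLast a τ i.castSucc = a.succAbove (τ i) := by
  simp [insertLast]

lemma insertLast_bijective :
    Function.Bijective fun q : Fin (n + 1) × Equiv.Perm (Fin n) => insertLast q.1 q.2 := by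
  rw [Fintype.bijective_iff_injective_and_card]
  refine ⟨?_, by simp [Fintype.card_perm, Nat.factorial_succ]⟩
  rintro ⟨a, τ⟩ ⟨b, ρ⟩ h
  have h_apply (x : Fin (n + 1)) : insertLast a τ x = insertLast b ρ x := DFunLike.congr_fun h x
  obtain rfl : a = b := by simpa using h_apply (Fin.last n)
  obtain rfl : τ = ρ := Equiv.ext fun i => by simpa using h_apply i.castSucc
  rfl

/-- The bijection between `k`-tuples of permutations of `Fin (n + 1)` and pairs of a `k`-tuple of
last values and a `k`-tuple of permutations of `Fin n`. -/
noncomputable def insertLastEquiv (k n : ℕ) :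
    (Fin k → Fin (n + 1)) × (Fin k → Equiv.Perm (Fin n)) ≃ (Fin k → Equiv.Perm (Fin (n + 1))) :=
  (Equiv.arrowProdEquivProdArrow _ _ _).symm.trans
    (Equiv.piCongrRight fun _ => Equiv.ofBijective _ insertLast_bijective)

lemma insertLastEquiv_apply {k : ℕ} (a : Fin k → Fin (n + 1)) (τs : Fin k → Equiv.Perm (Fin n)) :
    insertLastEquiv k n (a, τs) = fun w => insertLast (a w) (τs w) :=
  rfl

lemma isLTRMin_insertLast_castSucc (a : Fin (n + 1)) (τ : Equiv.Perm (Fin n)) (i : Fin n) :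
    IsLTRMin (insertLast a τ) i.castSucc ↔ IsLTRMin τ i := by
  simp [IsLTRMin, Fin.forall_fin_succ', (Fin.castSucc_lt_last i).not_gt]

lemma isLTRMin_insertLast_last (a : Fin (n + 1)) (τ : Equiv.Perm (Fin n)) :
    IsLTRMin (insertLast a τ) (Fin.last n) ↔ a = 0 := by
  have h_iff : IsLTRMin (insertLast a τ) (Fin.last n) ↔ ∀ i : Fin n, a < a.succAbove (τ i) := by
    simp [IsLTRMin, Fin.forall_fin_succ', Fin.castSucc_lt_last]
  rw [h_iff]
  constructor
  · intro h
    by_contra ha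
    obtain ⟨j, hj⟩ := Fin.exists_succAbove_eq (Ne.symm ha)
    have h_lt := h (τ.symm j)
    rw [τ.apply_symm_apply, hj] at h_lt
    exact Fin.not_lt_zero _ h_lt
  · rintro rfl i
    simp

end InsertLast

section JointDistribution

variable {k n : ℕ}

lemma ltrCount_insertLastEquiv_castSucc (a : Fin k → Fin (n + 1))
    (τs : Fin k → Equiv.Perm (Fin n)) (i : Fin n) :
    ltrCount (insertLastEquiv k n (a, τs)) i.castSucc = ltrCount τs i := by
  simp only [ltrCount, insertLastEquiv_apply, isLTRMin_insertLast_castSucc]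

lemma ltrCount_insertLastEquiv_last (a : Fin k → Fin (n + 1)) (τs : Fin k → Equiv.Perm (Fin n)) :
    ltrCount (insertLastEquiv k n (a, τs)) (Fin.last n) = #{w | a w = 0} := by
  simp only [ltrCount, insertLastEquiv_apply, isLTRMin_insertLast_last]

lemma card_fun_fiber_eq {κ α : Type*} [Fintype κ] [DecidableEq κ] [Fintype α] [DecidableEq α]
    (a : α) (S : Finset κ) :
    #{x : κ → α | ({w | x w = a} : Finset κ) = S} =
      (Fintype.card α - 1) ^ (Fintype.card κ - #S) := by
  have h_pi : ({x : κ → α | ({w | x w = a} : Finset κ) = S} : Finset (κ → α)) =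
      Fintype.piFinset fun w => if w ∈ S then {a} else {a}ᶜ := by
    ext x
    simp only [mem_filter_univ, Fintype.mem_piFinset, Finset.ext_iff]
    refine forall_congr' fun w => ?_
    by_cases hw : w ∈ S <;> simp [hw]
  simp only [h_pi, Fintype.card_piFinset, apply_ite card, card_singleton, card_compl,
    prod_ite, prod_const, one_pow, one_mul, filter_not, filter_univ_mem, ← compl_eq_univ_sdiff]

lemma sum_apply_card_fiber {κ α M : Type*} [Fintype κ] [DecidableEq κ] [Fintype α]
    [DecidableEq α] [AddCommMonoid M] (a : α) (f : ℕ → M) :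
    ∑ x : κ → α, f #{w | x w = a} =
      ∑ p ∈ range (Fintype.card κ + 1),
        ((Fintype.card κ).choose p * (Fintype.card α - 1) ^ (Fintype.card κ - p)) • f p := by
  calc ∑ x : κ → α, f #{w | x w = a}
      = ∑ S : Finset κ, ∑ x : κ → α with ({w | x w = a} : Finset κ) = S, f #S :=
        (sum_fiberwise' _ (fun x : κ → α => ({w | x w = a} : Finset κ)) fun S => f #S).symm
    _ = ∑ S ∈ (univ : Finset κ).powerset,
          (Fintype.card α - 1) ^ (Fintype.card κ - #S) • f #S := by
        simp only [sum_const, card_fun_fiber_eq, powerset_univ]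
    _ = _ := by
        rw [sum_powerset_apply_card
          fun p => (Fintype.card α - 1) ^ (Fintype.card κ - p) • f p]
        simp only [card_univ, mul_smul]

/-- As the weights `f` are arbitrary, this is the joint distribution of `l(1), …, l(n)`; their
independence is the product on the right-hand side. -/
lemma sum_prod_apply_ltrCount {R : Type*} [CommSemiring R] (k n : ℕ) (f : ℕ → ℕ → R) :
    ∑ σs : Fin k → Equiv.Perm (Fin n), ∏ i : Fin n, f i (ltrCount σs i) =
      ∏ j ∈ range n, ∑ p ∈ range (k + 1), (k.choose p * j ^ (k - p)) • f j p := by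
  induction n with
  | zero => simp
  | succ n ih =>
    rw [← (insertLastEquiv k n).sum_comp, Fintype.sum_prod_type_right, prod_range_succ, ← ih,
      sum_mul]
    refine sum_congr rfl fun τs _ => ?_
    simp only [Fin.prod_univ_castSucc, ltrCount_insertLastEquiv_castSucc,
      ltrCount_insertLastEquiv_last, Fin.val_castSucc, Fin.val_last, ← mul_sum]
    rw [sum_apply_card_fiber (0 : Fin (n + 1)) (f n)]
    simp only [Fintype.card_fin, Nat.add_sub_cancel]

end JointDistribution

section GeneratingPolynomial

open Polynomial

lemma coeff_prod_C_mul_X_add_C {ι R : Type*} [DecidableEq ι] [CommSemiring R] (s : Finset ι)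
    (a b : ι → R) (m : ℕ) :
    (∏ i ∈ s, (C (a i) * X + C (b i))).coeff m =
      ∑ T ∈ s.powersetCard m, (∏ i ∈ T, a i) * ∏ i ∈ s \ T, b i := by
  rw [prod_add, finsetSum_coeff, powersetCard_eq_filter, sum_filter]
  refine sum_congr rfl fun T _ => ?_
  rw [prod_mul_distrib, prod_const, ← map_prod, ← map_prod, mul_right_comm, ← map_mul,
    coeff_C_mul_X_pow]
  simp only [eq_comm]

/-- The polynomial `∑ p ≤ k, binom(k, p) j ^ (k - p) X ^ [c p = 1]`, which is the factor contributed
by the index `j + 1` to the generating polynomial of `O_C(n, ·)`. -/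
noncomputable def indexFactor (R : Type*) [CommSemiring R] (k : ℕ) (c : ℕ → ℕ) (j : ℕ) : R[X] :=
  ∑ p ∈ range (k + 1), (k.choose p * j ^ (k - p)) • if c p = 1 then X else 1

lemma natCast_Oseq_eq_coeff (R : Type*) [CommSemiring R] (k : ℕ) (c : ℕ → ℕ) (n m : ℕ) :
    (Oseq k c n m : R) = (∏ j ∈ range n, indexFactor R k c j).coeff m := by
  simp only [indexFactor]
  rw [← sum_prod_apply_ltrCount k n fun _ p => if c p = 1 then (X : R[X]) else 1]
  simp only [prod_ite, prod_const, one_pow, mul_one, finsetSum_coeff, coeff_X_pow,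
    Oseq, card_filter, Nat.cast_sum, Nat.cast_ite, Nat.cast_one, Nat.cast_zero, eq_comm]

lemma indexFactor_zero (R : Type*) [CommSemiring R] {k : ℕ} {c : ℕ → ℕ}
    (hck : c k = 0 ∨ c k = 1) : indexFactor R k c 0 = X ^ c k := by
  have h_vanish : ∀ p ∈ range (k + 1), p ≠ k →
      (k.choose p * 0 ^ (k - p)) • (if c p = 1 then X else 1 : R[X]) = 0 := by
    intro p hp hpk
    rw [zero_pow (by grind), mul_zero, zero_smul]
  rw [indexFactor, sum_eq_single_of_mem k (self_mem_range_succ k) h_vanish]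
  rcases hck with h | h <;> simp [h]

lemma indexFactor_eq_C_mul {k : ℕ} {c : ℕ → ℕ} (hc : ∀ p ≤ k, c p = 0 ∨ c p = 1) {j : ℕ}
    (hj : j ≠ 0) :
    indexFactor ℝ k c j =
      C ((j : ℝ) ^ k) * (C (Fc k c (j + 1)) * X + C (Fc k (fun p => 1 - c p) (j + 1))) := by
  simp only [indexFactor, Fc, map_sum, sum_mul, ← sum_add_distrib, mul_sum, Nat.add_sub_cancel]
  refine sum_congr rfl fun p hp => ?_
  have hpk : p ≤ k := mem_range_succ_iff.mp hp
  have h_weight :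
      (k.choose p : ℝ) * (j : ℝ) ^ (k - p) = (j : ℝ) ^ k * (k.choose p / (j : ℝ) ^ p) := by
    rw [pow_sub₀ _ (Nat.cast_ne_zero.mpr hj) hpk]
    ring
  have h_cast : ((k.choose p * j ^ (k - p) : ℕ) : ℝ[X]) =
      C ((j : ℝ) ^ k) * C (k.choose p / (j : ℝ) ^ p) := by
    rw [← C_mul, ← h_weight]
    simp
  rw [nsmul_eq_mul, h_cast]
  rcases hc p hpk with h | h <;> simp [h, mul_assoc]

lemma prod_indexFactor_succ {k : ℕ} {c : ℕ → ℕ} (hc : ∀ p ≤ k, c p = 0 ∨ c p = 1) (n : ℕ) :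
    ∏ j ∈ range (n + 1), indexFactor ℝ k c j =
      C ((n.factorial : ℝ) ^ k) *
        (∏ j ∈ Icc 2 (n + 1), (C (Fc k c j) * X + C (Fc k (fun p => 1 - c p) j))) * X ^ c k := by
  induction n with
  | zero => simp [indexFactor_zero ℝ (hc k le_rfl)]
  | succ n ih =>
    rw [prod_range_succ, ih, indexFactor_eq_C_mul hc n.succ_ne_zero,
      prod_Icc_succ_top (by lia : 2 ≤ n + 1 + 1), Nat.factorial_succ, Nat.cast_mul, mul_pow, C_mul]
    ring

end GeneratingPolynomial

/-- Theorem 2.1 (expression for C sequential optimization numbers). -/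
theorem stmt_0 (k : ℕ) (hk : 1 ≤ k) (c : ℕ → ℕ) (hc : ∀ p ≤ k, c p = 0 ∨ c p = 1)
    (n m : ℕ) (hn : 1 ≤ n) (hm1 : 1 ≤ m) (hmn : m ≤ n) :
    (Oseq k c n (m + c k - 1) : ℝ) =
      ((n - 1).factorial : ℝ) ^ k *
        ∑ T ∈ (Finset.Icc 2 n).powersetCard (m - 1),
          (∏ j ∈ T, Fc k c j) * ∏ j ∈ Finset.Icc 2 n \ T, Fc k (fun p => 1 - c p) j := by
  obtain ⟨n, rfl⟩ := Nat.exists_eq_add_of_le' hn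
  obtain ⟨m, rfl⟩ := Nat.exists_eq_add_of_le' hm1
  have h_index : m + 1 + c k - 1 = m + c k := by lia
  rw [h_index, natCast_Oseq_eq_coeff, prod_indexFactor_succ hc, Polynomial.coeff_mul_X_pow,
    Polynomial.coeff_C_mul, coeff_prod_C_mul_X_add_C, Nat.add_sub_cancel, Nat.add_sub_cancel]
end

section
/- Fix an integer k ≥ 1 and C = (c_0,…,c_k) with each c_p ∈ {0,1}. For every n ≥ 1 and every integer m ≥ 0, O_C(n+1, m+1) = A_n(C)·O_C(n, m) + A_n(C′)·O_C(n, m+1), where A_n(C) = n^k·F_{n+1}(C) = Σ_{p=0}^{k} c_p · binom(k,p) · n^{k−p} (a nonnegative integer) and A_n(C′) = Σ_{p=0}^{k} (1−c_p) · binom(k,p) · n^{k−p}. -/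
open Finset

/-!
A permutation of `{1,…,n+1}` is determined by its last value `x` and by the relative order of its
first `n` values. Neither the choice of `x` nor the presence of the last entry affects which of the
first `n` indices are left-to-right minima, while the last index is one exactly when `x` is the
smallest value. In a `k`-tuple, the last index is therefore a left-to-right minimum of exactly `p`
of the permutations for `k.choose p * n ^ (k - p)` of the choices of the `k` last values, and such a
choice raises the number of counted indices by one if `c p = 1` and leaves it unchanged otherwise.
-/

section Pi

variable {ι α : Type*} [Fintype ι] [DecidableEq ι] [Fintype α] (P : α → Prop) [DecidablePred P]

lemma card_pi_filter_apply_eq (S : Finset ι) :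
    #{v : ι → α | ({i | P (v i)} : Finset ι) = S} =
      #{a | P a} ^ #S * #{a | ¬P a} ^ (Fintype.card ι - #S) := by
  have fiber_eq : ({v | ({i | P (v i)} : Finset ι) = S} : Finset (ι → α)) =
      Fintype.piFinset fun i => if i ∈ S then univ.filter P else univ.filter (¬P ·) := by
    ext v
    simp only [mem_filter, mem_univ, true_and, Fintype.mem_piFinset, Finset.ext_iff]
    refine forall_congr' fun i => ?_
    by_cases hi : i ∈ S <;> simp [hi]
  rw [fiber_eq, Fintype.card_piFinset]
  simp only [apply_ite card, prod_ite, prod_const, filter_mem_eq_inter, univ_inter,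
    filter_notMem_eq_sdiff, ← compl_eq_univ_sdiff, card_compl]

lemma sum_pi_apply_card_filter {M : Type*} [AddCommMonoid M] (f : ℕ → M) :
    ∑ v : ι → α, f #{i | P (v i)} =
      ∑ p ∈ range (Fintype.card ι + 1), ((Fintype.card ι).choose p *
        (#{a | P a} ^ p * #{a | ¬P a} ^ (Fintype.card ι - p))) • f p := by
  let support (v : ι → α) : Finset ι := {i | P (v i)}
  calc ∑ v, f #(support v)
      = ∑ S, ∑ v with support v = S, f #(support v) := (sum_fiberwise univ support _).symm
    _ = ∑ S : Finset ι, (#{a | P a} ^ #S * #{a | ¬P a} ^ (Fintype.card ι - #S)) • f #S := by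
        refine sum_congr rfl fun S _ => ?_
        rw [← card_pi_filter_apply_eq, ← sum_const]
        exact sum_congr rfl fun v hv => congrArg (f #·) (mem_filter.1 hv).2
    _ = _ := by
        rw [← powerset_univ, sum_powerset_apply_card
          fun p => (#{a | P a} ^ p * #{a | ¬P a} ^ (Fintype.card ι - p)) • f p]
        simp only [card_univ, mul_smul]

end Pi

section PermSnoc

variable {ι : Type*} {n : ℕ}

/-- The permutation of `Fin (n + 1)` whose last value is `x` and whose first `n` values are those of
`σ`, in order, with every value at least `x` raised by one. -/
def permSnoc (x : Fin (n + 1)) (σ : Equiv.Perm (Fin n)) : Equiv.Perm (Fin (n + 1)) :=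
  (finSuccEquivLast.trans σ.optionCongr).trans (finSuccEquiv' x).symm

@[simp]
lemma permSnoc_last (x : Fin (n + 1)) (σ : Equiv.Perm (Fin n)) :
    permSnoc x σ (Fin.last n) = x := by
  simp [permSnoc]

@[simp]
lemma permSnoc_castSucc (x : Fin (n + 1)) (σ : Equiv.Perm (Fin n)) (i : Fin n) :
    permSnoc x σ i.castSucc = x.succAbove (σ i) := by
  simp [permSnoc]

lemma permSnoc_bijective :
    Function.Bijective fun p : Fin (n + 1) × Equiv.Perm (Fin n) => permSnoc p.1 p.2 := by
  refine (Fintype.bijective_iff_injective_and_card _).2 ⟨?_, ?_⟩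
  · rintro ⟨x, σ⟩ ⟨y, τ⟩ h
    obtain rfl : x = y := by simpa using DFunLike.congr_fun h (Fin.last n)
    have same_perm : σ = τ := Equiv.ext fun i => by simpa using DFunLike.congr_fun h i.castSucc
    rw [same_perm]
  · simp [Fintype.card_perm, Nat.factorial_succ]

/-- Tuples of permutations of `Fin (n + 1)`, split into the tuple of their last values and the tuple
of the permutations of `Fin n` order isomorphic to the remaining values; see `permSnoc`. -/
noncomputable def permSnocTupleEquiv :
    (ι → Fin (n + 1)) × (ι → Equiv.Perm (Fin n)) ≃ (ι → Equiv.Perm (Fin (n + 1))) :=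
  (Equiv.arrowProdEquivProdArrow ι _ _).symm.trans
    (Equiv.piCongrRight fun _ => Equiv.ofBijective _ permSnoc_bijective)

@[simp]
lemma permSnocTupleEquiv_apply (v : ι → Fin (n + 1)) (τs : ι → Equiv.Perm (Fin n)) (w : ι) :
    permSnocTupleEquiv (v, τs) w = permSnoc (v w) (τs w) :=
  rfl

end PermSnoc

section LTRMin

variable {n k : ℕ}

lemma isLTRMin_last_iff (σ : Equiv.Perm (Fin (n + 1))) :
    IsLTRMin σ (Fin.last n) ↔ σ (Fin.last n) = 0 := by
  constructor
  · intro last_isMin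
    by_contra last_ne_zero
    have zero_before_last : σ.symm 0 < Fin.last n :=
      Fin.lt_last_iff_ne_last.2 fun h => last_ne_zero (σ.symm_apply_eq.1 h).symm
    simpa using last_isMin _ zero_before_last
  · intro last_eq_zero j hj
    rw [last_eq_zero, Fin.pos_iff_ne_zero, ← last_eq_zero]
    exact σ.injective.ne hj.ne

lemma isLTRMin_permSnoc_castSucc (x : Fin (n + 1)) (σ : Equiv.Perm (Fin n)) (i : Fin n) :
    IsLTRMin (permSnoc x σ) i.castSucc ↔ IsLTRMin σ i := by
  simp [IsLTRMin, Fin.forall_fin_succ', Fin.succAbove_lt_succAbove_iff,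
    Fin.not_lt.2 (Fin.le_last _)]

lemma ltrCount_permSnocTupleEquiv_castSucc (v : Fin k → Fin (n + 1))
    (τs : Fin k → Equiv.Perm (Fin n)) (i : Fin n) :
    ltrCount (permSnocTupleEquiv (v, τs)) i.castSucc = ltrCount τs i := by
  simp only [ltrCount, permSnocTupleEquiv_apply, isLTRMin_permSnoc_castSucc]

lemma ltrCount_permSnocTupleEquiv_last (v : Fin k → Fin (n + 1))
    (τs : Fin k → Equiv.Perm (Fin n)) :
    ltrCount (permSnocTupleEquiv (v, τs)) (Fin.last n) = #{w | v w = 0} := by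
  simp only [ltrCount, permSnocTupleEquiv_apply, isLTRMin_last_iff, permSnoc_last]

end LTRMin

section Oseq

variable {n k : ℕ} (c : ℕ → ℕ)

/-- The number of indices `i` with `c (l i) = 1`, the statistic whose distribution is `Oseq`. -/
def markedCount (σs : Fin k → Equiv.Perm (Fin n)) : ℕ :=
  #{i | c (ltrCount σs i) = 1}

lemma oseq_eq_sum (k n m : ℕ) :
    Oseq k c n m =
      ∑ σs : Fin k → Equiv.Perm (Fin n), if markedCount c σs = m then 1 else 0 :=
  card_filter _ _

lemma markedCount_permSnocTupleEquiv (v : Fin k → Fin (n + 1))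
    (τs : Fin k → Equiv.Perm (Fin n)) :
    markedCount c (permSnocTupleEquiv (v, τs)) =
      markedCount c τs + if c #{w | v w = 0} = 1 then 1 else 0 := by
  simp only [markedCount, card_filter, Fin.sum_univ_castSucc, ltrCount_permSnocTupleEquiv_castSucc,
    ltrCount_permSnocTupleEquiv_last]

lemma oseq_succ_succ (k n m : ℕ) :
    Oseq k c (n + 1) (m + 1) =
      ∑ p ∈ range (k + 1), k.choose p * n ^ (k - p) *
        if c p = 1 then Oseq k c n m else Oseq k c n (m + 1) := by
  calc Oseq k c (n + 1) (m + 1)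
      = ∑ v : Fin k → Fin (n + 1), ∑ τs : Fin k → Equiv.Perm (Fin n),
          if markedCount c τs + (if c #{w | v w = 0} = 1 then 1 else 0) = m + 1 then 1 else 0 := by
        rw [oseq_eq_sum, ← permSnocTupleEquiv.sum_comp, Fintype.sum_prod_type]
        simp only [markedCount_permSnocTupleEquiv]
    _ = ∑ v : Fin k → Fin (n + 1),
          if c #{w | v w = 0} = 1 then Oseq k c n m else Oseq k c n (m + 1) := by
        refine sum_congr rfl fun v _ => ?_
        split_ifs <;> simp [oseq_eq_sum]
    _ = _ := by
        rw [sum_pi_apply_card_filter (fun x : Fin (n + 1) => x = 0)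
          fun p => if c p = 1 then Oseq k c n m else Oseq k c n (m + 1)]
        simp [filter_eq', filter_ne']

end Oseq

/-- Theorem 2.2 (recurrence formula for C sequential optimization numbers). -/
theorem stmt_2 (k : ℕ) (hk : 1 ≤ k) (c : ℕ → ℕ) (hc : ∀ p ≤ k, c p = 0 ∨ c p = 1)
    (n m : ℕ) (hn : 1 ≤ n) :
    Oseq k c (n + 1) (m + 1) =
      (∑ p ∈ Finset.range (k + 1), c p * k.choose p * n ^ (k - p)) * Oseq k c n m +
      (∑ p ∈ Finset.range (k + 1), (1 - c p) * k.choose p * n ^ (k - p)) * Oseq k c n (m + 1) := by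
  rw [oseq_succ_succ, sum_mul, sum_mul, ← sum_add_distrib]
  refine sum_congr rfl fun p hp => ?_
  rcases hc p (mem_range_succ_iff.1 hp) with h | h <;> simp [h]
end

section
/- For every n ≥ 2 and every j with 2 ≤ j ≤ n, the number of permutations σ of {1,…,n} whose set of left-to-right minima positions is exactly {1, j} satisfies (j − 1) · |{such σ}| = (n − 1)!. -/
open Finset

/-!
Write `0 < j` for the two positions, counted from `0`. The left-to-right minima of `σ` are exactly
`0` and `j` iff `σ` takes its least value at `j` and `σ 0` is the least of the values at the
positions before `j`. The first condition leaves `(n - 1)!` permutations, and by symmetry the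
smallest value among the first `j` positions is equally likely to sit at any of them, so one `j`-th
of these permutations satisfies the second condition.
-/

section Counting

variable {α β : Type*}

theorem card_filter_forall_apply_le_eq_one [LinearOrder β] {s : Finset α} {f : α → β}
    (hs : s.Nonempty) (hf : Set.InjOn f s) : #{a ∈ s | ∀ i ∈ s, f a ≤ f i} = 1 := by
  obtain ⟨a, ha, hmin⟩ := s.exists_min_image f hs
  refine card_eq_one.2 ⟨a, eq_singleton_iff_unique_mem.2 ⟨mem_filter.2 ⟨ha, hmin⟩, ?_⟩⟩
  intro b hb
  obtain ⟨hbs, hbmin⟩ := mem_filter.1 hb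
  exact hf hbs ha ((hbmin a ha).antisymm (hmin b hbs))

variable [DecidableEq α]

theorem card_filter_perm_apply_eq [Fintype α] (a b : α) :
    #{σ : Equiv.Perm α | σ a = b} = (Fintype.card α - 1).factorial := by
  let restrict : {σ : Equiv.Perm α // σ a = b} ≃ ({x // x ≠ a} ≃ {y // y ≠ b}) :=
    (((Equiv.optionSubtypeNe a).symm.equivCongr (.refl α)).subtypeEquiv fun σ => by simp).trans
      (Equiv.optionSubtype b)
  let e : {x // x ≠ a} ≃ {y // y ≠ b} :=
    (Equiv.swap a b).subtypeEquiv fun x => by simp [Equiv.swap_apply_eq_iff]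
  rw [← Fintype.card_subtype, Fintype.card_congr restrict, Fintype.card_equiv e,
    Fintype.card_subtype_compl, Fintype.card_subtype_eq]

theorem forall_mem_swap_apply_iff {s : Finset α} {a b : α} (ha : a ∈ s) (hb : b ∈ s)
    {p : α → Prop} : (∀ i ∈ s, p (Equiv.swap a b i)) ↔ ∀ i ∈ s, p i := by
  have swap_mem : ∀ i ∈ s, Equiv.swap a b i ∈ s := fun i hi => by
    rw [Equiv.swap_apply_def]
    split_ifs <;> assumption
  exact ⟨fun h i hi => by simpa using h _ (swap_mem i hi), fun h i hi => h _ (swap_mem i hi)⟩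

variable [LinearOrder β]

theorem card_filter_forall_apply_le_eq_of_swap {s : Finset α} {P : Finset (α ≃ β)} {a b : α}
    (ha : a ∈ s) (hb : b ∈ s) (hP : ∀ σ ∈ P, (Equiv.swap a b).trans σ ∈ P) :
    #{σ ∈ P | ∀ i ∈ s, σ b ≤ σ i} = #{σ ∈ P | ∀ i ∈ s, σ a ≤ σ i} := by
  have swap_swap : ∀ σ : α ≃ β, (Equiv.swap a b).trans ((Equiv.swap a b).trans σ) = σ :=
    fun σ => by ext; simp
  refine card_nbij' (Equiv.swap a b).trans (Equiv.swap a b).trans ?_ ?_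
    (fun σ _ => swap_swap σ) (fun σ _ => swap_swap σ)
  · intro σ hσ
    obtain ⟨hσP, hmin⟩ := mem_filter.1 hσ
    refine mem_filter.2 ⟨hP σ hσP, ?_⟩
    simpa using (forall_mem_swap_apply_iff ha hb (p := (σ b ≤ σ ·))).2 hmin
  · intro σ hσ
    obtain ⟨hσP, hmin⟩ := mem_filter.1 hσ
    refine mem_filter.2 ⟨hP σ hσP, ?_⟩
    simpa using (forall_mem_swap_apply_iff ha hb (p := (σ a ≤ σ ·))).2 hmin

theorem card_mul_card_filter_forall_apply_le {s : Finset α} {P : Finset (α ≃ β)} {a : α}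
    (ha : a ∈ s) (hP : ∀ σ ∈ P, ∀ b ∈ s, (Equiv.swap a b).trans σ ∈ P) :
    #s * #{σ ∈ P | ∀ i ∈ s, σ a ≤ σ i} = #P := by
  rw [← mul_one #P]
  exact card_mul_eq_card_mul (fun b (σ : α ≃ β) => ∀ i ∈ s, σ b ≤ σ i)
    (fun b hb => card_filter_forall_apply_le_eq_of_swap ha hb fun σ hσ => hP σ hσ b hb)
    (fun σ _ => card_filter_forall_apply_le_eq_one ⟨a, ha⟩ σ.injective.injOn)

end Counting

namespace IsLTRMin

variable {n : ℕ} {σ : Equiv.Perm (Fin n)} {i j : Fin n}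

theorem iff_forall_le : IsLTRMin σ i ↔ ∀ k < i, σ i ≤ σ k :=
  forall₂_congr fun _ hk => (σ.injective.ne hk.ne').le_iff_lt.symm

variable [NeZero n]

theorem zero : IsLTRMin σ 0 :=
  fun k hk => absurd hk (Fin.not_lt_zero k)

theorem of_apply_eq_zero (hi : σ i = 0) : IsLTRMin σ i :=
  iff_forall_le.2 fun k _ => hi ▸ Fin.zero_le (σ k)

theorem le_of_apply_eq_zero (hi : IsLTRMin σ i) (hj : σ j = 0) : i ≤ j :=
  not_lt.1 fun hji => Fin.not_lt_zero (σ i) (hj ▸ hi j hji)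

theorem exists_lt_forall_apply_le (σ : Equiv.Perm (Fin n)) (hj : 0 < j) :
    ∃ k < j, IsLTRMin σ k ∧ ∀ i < j, σ k ≤ σ i := by
  obtain ⟨k, hk, hmin⟩ := (Iio j).exists_min_image σ ⟨0, mem_Iio.2 hj⟩
  simp only [mem_Iio] at hk hmin
  exact ⟨k, hk, iff_forall_le.2 fun i hi => hmin i (hi.trans hk), hmin⟩

theorem filter_eq_pair_iff (hj : 0 < j) :
    univ.filter (IsLTRMin σ) = {0, j} ↔ σ j = 0 ∧ ∀ i < j, σ 0 ≤ σ i := by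
  simp only [Finset.ext_iff, mem_filter_univ, mem_insert, mem_singleton]
  constructor
  · intro h
    constructor
    · obtain ⟨k, hσk⟩ := σ.surjective 0
      obtain rfl | rfl := (h k).1 (of_apply_eq_zero hσk)
      · exact absurd hj (((h j).2 (.inr rfl)).le_of_apply_eq_zero hσk).not_gt
      · exact hσk
    · obtain ⟨k, hkj, hk, hmin⟩ := exists_lt_forall_apply_le σ hj
      obtain rfl : k = 0 := ((h k).1 hk).resolve_right hkj.ne
      exact hmin
  · rintro ⟨hσj, hmin⟩ i
    refine ⟨fun hi => ?_, ?_⟩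
    · rcases (hi.le_of_apply_eq_zero hσj).lt_or_eq with hij | rfl
      · exact .inl (by_contra fun hi0 => (hi 0 (Fin.pos_iff_ne_zero.2 hi0)).not_ge (hmin i hij))
      · exact .inr rfl
    · rintro (rfl | rfl)
      exacts [zero, of_apply_eq_zero hσj]

theorem mul_card_filter_eq_pair (hj : 0 < j) :
    (j : ℕ) * #{σ : Equiv.Perm (Fin n) | univ.filter (IsLTRMin σ) = {0, j}} =
      (n - 1).factorial := by
  have swap_stable : ∀ σ ∈ ({σ | σ j = 0} : Finset (Equiv.Perm (Fin n))), ∀ k ∈ Iio j,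
      (Equiv.swap 0 k).trans σ ∈ ({σ | σ j = 0} : Finset (Equiv.Perm (Fin n))) := by
    intro σ hσ k hk
    rw [mem_filter_univ] at hσ ⊢
    rw [Equiv.trans_apply, Equiv.swap_apply_of_ne_of_ne hj.ne' (mem_Iio.1 hk).ne', hσ]
  calc (j : ℕ) * #{σ : Equiv.Perm (Fin n) | univ.filter (IsLTRMin σ) = {0, j}}
      = #(Iio j) * #{σ ∈ ({σ | σ j = 0} : Finset (Equiv.Perm (Fin n))) |
          ∀ i ∈ Iio j, σ 0 ≤ σ i} := by
        simp only [filter_eq_pair_iff hj, Fin.card_Iio, filter_filter, mem_Iio]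
    _ = #{σ : Equiv.Perm (Fin n) | σ j = 0} := by
        -- `Fin` has its own decidability instance for the bounded quantifier.
        convert card_mul_card_filter_forall_apply_le (mem_Iio.2 hj) swap_stable
    _ = (n - 1).factorial := by rw [card_filter_perm_apply_eq, Fintype.card_fin]

end IsLTRMin

/-- Basis step of Theorem 2.1: the number of permutations of `{1,…,n}` whose set of
left-to-right minima positions is exactly `{1, j}` is `(n-1)!/(j-1)`. -/
theorem stmt_7 (n j : ℕ) (hn : 2 ≤ n) (hj2 : 2 ≤ j) (hjn : j ≤ n) :
    (j - 1) * ((univ : Finset (Equiv.Perm (Fin n))).filter fun σ =>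
        univ.filter (IsLTRMin σ) = {(⟨0, by omega⟩ : Fin n), ⟨j - 1, by omega⟩}).card =
      (n - 1).factorial := by
  have : NeZero n := ⟨by omega⟩
  have hj : (0 : Fin n) < ⟨j - 1, by omega⟩ := Fin.lt_def.2 (Nat.sub_pos_of_lt hj2)
  exact IsLTRMin.mul_card_filter_eq_pair hj
end

section
/- Fix an integer k ≥ 1 and C = (c_0,…,c_k) with each c_p ∈ {0,1} and c_0 = 0. Let n ≥ 2, let M_1 ≥ 1 be an integer, and set M = ⌈e·k·c_1·(log(n−1) + 1) + e·(π²/6)·Σ_{p=2}^{k} c_p·binom(k,p)⌉ + M_1. Then Σ_{m > M + c_k − 1} O_C(n, m) ≤ e^{−M_1} · (n!)^k. -/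
open Finset

/-!
Appending a last value to a permutation of `{1,…,n}` leaves the left-to-right minima at the first
`n` indices unchanged, and creates a new one exactly when the appended value is the smallest.
Iterating over `k`-tuples gives
`∑_m O_C(n, m) z^m = ∏_{j=1}^n ∑_p binom(k,p) (j-1)^(k-p) z^(c_p)`,
whose `j = 1` factor is `z^(c_k)` and whose other factors are, for `z ≥ 1`, at most
`j^k exp((z-1) F_j(C))`.
Markov's inequality at `z = e` then reduces the tail bound to an estimate of `∑_{j=2}^n F_j(C)`: its
terms with `p = 1` form a harmonic sum, and those with `p ≥ 2` are dominated by `ζ(2)`.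
-/

/-- The permutation of `Fin (n + 1)` with last value `a` whose other values are in the same relative
order as those of `σ`. -/
def appendLast {n : ℕ} (a : Fin (n + 1)) (σ : Equiv.Perm (Fin n)) : Equiv.Perm (Fin (n + 1)) :=
  finSuccEquivLast.trans (σ.optionCongr.trans (finSuccEquiv' a).symm)

section AppendLast

variable {n : ℕ} (a : Fin (n + 1)) (σ : Equiv.Perm (Fin n))

@[simp]
lemma appendLast_last : appendLast a σ (Fin.last n) = a := by
  simp [appendLast]

@[simp]
lemma appendLast_castSucc (i : Fin n) : appendLast a σ i.castSucc = a.succAbove (σ i) := by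
  simp [appendLast]

lemma bijective_appendLast :
    Function.Bijective fun x : Fin (n + 1) × Equiv.Perm (Fin n) => appendLast x.1 x.2 := by
  refine (Fintype.bijective_iff_injective_and_card _).2
    ⟨?_, by simp [Fintype.card_perm, Nat.factorial_succ]⟩
  rintro ⟨a, σ⟩ ⟨b, τ⟩ (h : appendLast a σ = appendLast b τ)
  obtain rfl : a = b := by simpa using DFunLike.congr_fun h (Fin.last n)
  have hστ : σ = τ := Equiv.ext fun i => by simpa using DFunLike.congr_fun h i.castSucc
  rw [hστ]

lemma isLTRMin_appendLast_castSucc (i : Fin n) :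
    IsLTRMin (appendLast a σ) i.castSucc ↔ IsLTRMin σ i := by
  simp [IsLTRMin, Fin.forall_fin_succ', (Fin.strictMono_succAbove a).lt_iff_lt, Fin.le_last]

lemma isLTRMin_appendLast_last : IsLTRMin (appendLast a σ) (Fin.last n) ↔ a = 0 := by
  constructor
  · intro hmin
    by_contra ha
    obtain ⟨j, hj⟩ := Fin.exists_succAbove_eq (Ne.symm ha)
    have hlt := hmin (σ.symm j).castSucc (Fin.castSucc_lt_last _)
    simp [hj] at hlt
  · rintro rfl j hj
    obtain ⟨i, rfl⟩ := Fin.exists_castSucc_eq.2 hj.ne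
    simp

end AppendLast

/-- `appendLast` in each component, as a bijection between tuples of permutations. -/
noncomputable def appendLastTupleEquiv (k n : ℕ) :
    (Fin k → Fin (n + 1)) × (Fin k → Equiv.Perm (Fin n)) ≃ (Fin k → Equiv.Perm (Fin (n + 1))) :=
  (Equiv.arrowProdEquivProdArrow _ _ _).symm.trans
    (Equiv.piCongrRight fun _ => Equiv.ofBijective _ bijective_appendLast)

section LTRCount

variable {k n : ℕ} (a : Fin k → Fin (n + 1)) (σs : Fin k → Equiv.Perm (Fin n))

lemma ltrCount_le (i : Fin n) : ltrCount σs i ≤ k :=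
  (card_le_univ _).trans_eq (Fintype.card_fin k)

lemma ltrCount_appendLastTupleEquiv_castSucc (i : Fin n) :
    ltrCount (appendLastTupleEquiv k n (a, σs)) i.castSucc = ltrCount σs i :=
  congrArg card <| filter_congr fun w _ => isLTRMin_appendLast_castSucc (a w) (σs w) i

lemma ltrCount_appendLastTupleEquiv_last :
    ltrCount (appendLastTupleEquiv k n (a, σs)) (Fin.last n) = #{w | a w = 0} :=
  congrArg card <| filter_congr fun w _ => isLTRMin_appendLast_last (a w) (σs w)

end LTRCount

section Fibers

variable {ι α : Type*} [Fintype ι] [DecidableEq ι] [Fintype α] [DecidableEq α]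

lemma card_functions_fiber_eq (b : α) (S : Finset ι) :
    #{a : ι → α | ({w | a w = b} : Finset ι) = S} =
      (Fintype.card α - 1) ^ (Fintype.card ι - #S) := by
  have hpi : ({a : ι → α | ({w | a w = b} : Finset ι) = S} : Finset (ι → α)) =
      Fintype.piFinset fun w => if w ∈ S then {b} else {b}ᶜ := by
    ext a
    simp only [mem_filter_univ, Finset.ext_iff, Fintype.mem_piFinset]
    refine forall_congr' fun w => ?_
    by_cases hw : w ∈ S <;> simp [hw]
  rw [hpi, Fintype.card_piFinset]
  simp [apply_ite card, prod_ite, card_compl, filter_not, ← compl_eq_univ_sdiff]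

lemma sum_functions_apply_card_fiber {R : Type*} [CommSemiring R] (b : α) (f : ℕ → R) :
    ∑ a : ι → α, f #{w | a w = b} =
      ∑ p ∈ range (Fintype.card ι + 1), ((Fintype.card ι).choose p : R) *
        ((Fintype.card α - 1 : ℕ) : R) ^ (Fintype.card ι - p) * f p := by
  calc ∑ a : ι → α, f #{w | a w = b}
      = ∑ S : Finset ι, ∑ a : ι → α with ({w | a w = b} : Finset ι) = S, f #S :=
        (sum_fiberwise' univ (fun a : ι → α => ({w | a w = b} : Finset ι)) fun S => f #S).symm
    _ = ∑ S ∈ (univ : Finset ι).powerset,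
          ((Fintype.card α - 1 : ℕ) : R) ^ (Fintype.card ι - #S) * f #S := by
        simp [card_functions_fiber_eq]
    _ = _ := by
        rw [sum_powerset_apply_card fun p =>
          ((Fintype.card α - 1 : ℕ) : R) ^ (Fintype.card ι - p) * f p]
        simp [mul_assoc]

end Fibers

section GeneratingFunction

variable {R : Type*} [CommSemiring R]

theorem sum_prod_ltrCount (k n : ℕ) (g : ℕ → ℕ → R) :
    ∑ σs : Fin k → Equiv.Perm (Fin n), ∏ i : Fin n, g i (ltrCount σs i) =
      ∏ i ∈ range n, ∑ p ∈ range (k + 1), (k.choose p : R) * (i : R) ^ (k - p) * g i p := by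
  induction n with
  | zero => simp
  | succ n ih =>
    have hlast : ∑ a : Fin k → Fin (n + 1), g n #{w | a w = 0} =
        ∑ p ∈ range (k + 1), (k.choose p : R) * (n : R) ^ (k - p) * g n p := by
      simpa using sum_functions_apply_card_fiber (ι := Fin k) (0 : Fin (n + 1)) (g n)
    rw [prod_range_succ, ← ih, ← hlast, ← (appendLastTupleEquiv k n).sum_comp,
      Fintype.sum_prod_type_right, sum_mul_sum]
    simp only [Fin.prod_univ_castSucc, ltrCount_appendLastTupleEquiv_castSucc,
      ltrCount_appendLastTupleEquiv_last, Fin.val_castSucc, Fin.val_last]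

variable {k : ℕ} {c : ℕ → ℕ}

theorem sum_Oseq_mul_pow (hc : ∀ p ≤ k, c p = 0 ∨ c p = 1) (n : ℕ) (z : R) :
    ∑ m ∈ range (n + 1), (Oseq k c n m : R) * z ^ m =
      ∏ i ∈ range n, ∑ p ∈ range (k + 1), (k.choose p : R) * (i : R) ^ (k - p) * z ^ c p := by
  let marked (σs : Fin k → Equiv.Perm (Fin n)) : ℕ := #{i | c (ltrCount σs i) = 1}
  have hmarked (σs) : marked σs = ∑ i, c (ltrCount σs i) := by
    refine (card_filter _ _).trans (sum_congr rfl fun i _ => ?_)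
    rcases hc _ (ltrCount_le σs i) with h | h <;> simp [h]
  have hmaps : ∀ σs ∈ univ, marked σs ∈ range (n + 1) := fun σs _ =>
    mem_range_succ_iff.2 <| (card_le_univ _).trans_eq (Fintype.card_fin n)
  calc ∑ m ∈ range (n + 1), (Oseq k c n m : R) * z ^ m
      = ∑ m ∈ range (n + 1), ∑ σs with marked σs = m, z ^ m := by
        simp [Oseq, marked]
    _ = ∑ σs, z ^ marked σs := sum_fiberwise_of_maps_to' hmaps _
    _ = ∑ σs : Fin k → Equiv.Perm (Fin n), ∏ i : Fin n, z ^ c (ltrCount σs i) := by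
        simp only [hmarked, prod_pow_eq_pow_sum]
    _ = _ := sum_prod_ltrCount k n fun _ p => z ^ c p

end GeneratingFunction

lemma Fc_nonneg (k : ℕ) (c : ℕ → ℕ) (j : ℕ) : 0 ≤ Fc k c j :=
  sum_nonneg fun _ _ => by positivity

section Factors

variable {k : ℕ} {c : ℕ → ℕ}

lemma sum_choose_mul_pow_mul_pow_eq (hc : ∀ p ≤ k, c p = 0 ∨ c p = 1) {i : ℕ} (hi : i ≠ 0)
    (z : ℝ) :
    ∑ p ∈ range (k + 1), (k.choose p : ℝ) * (i : ℝ) ^ (k - p) * z ^ c p =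
      ((i : ℝ) + 1) ^ k + (z - 1) * ((i : ℝ) ^ k * Fc k c (i + 1)) := by
  have hbinom : ((i : ℝ) + 1) ^ k =
      ∑ p ∈ range (k + 1), (k.choose p : ℝ) * (i : ℝ) ^ (k - p) := by
    rw [add_comm, add_pow]
    exact sum_congr rfl fun p _ => by ring
  rw [hbinom, Fc, mul_sum, mul_sum, ← sum_add_distrib]
  refine sum_congr rfl fun p hp => ?_
  have hpk : p ≤ k := mem_range_succ_iff.1 hp
  have hpow : (i : ℝ) ^ (k - p) = (i : ℝ) ^ k / (i : ℝ) ^ p :=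
    pow_sub₀ _ (Nat.cast_ne_zero.2 hi) hpk
  have hz : z ^ c p = 1 + (z - 1) * c p := by
    rcases hc p hpk with h | h <;> simp [h]
  rw [hz, hpow, Nat.add_sub_cancel]
  ring

lemma sum_choose_mul_pow_mul_pow_le (hc : ∀ p ≤ k, c p = 0 ∨ c p = 1) {i : ℕ} (hi : i ≠ 0)
    {z : ℝ} (hz : 1 ≤ z) :
    ∑ p ∈ range (k + 1), (k.choose p : ℝ) * (i : ℝ) ^ (k - p) * z ^ c p ≤
      ((i : ℝ) + 1) ^ k * Real.exp ((z - 1) * Fc k c (i + 1)) := by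
  have : 0 ≤ Fc k c (i + 1) := Fc_nonneg k c (i + 1)
  have : 0 ≤ z - 1 := sub_nonneg.2 hz
  calc _ = ((i : ℝ) + 1) ^ k + (z - 1) * ((i : ℝ) ^ k * Fc k c (i + 1)) :=
        sum_choose_mul_pow_mul_pow_eq hc hi z
    _ ≤ ((i : ℝ) + 1) ^ k + (z - 1) * (((i : ℝ) + 1) ^ k * Fc k c (i + 1)) := by
        gcongr
        exact le_add_of_nonneg_right zero_le_one
    _ = ((i : ℝ) + 1) ^ k * ((z - 1) * Fc k c (i + 1) + 1) := by ring
    _ ≤ _ := by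
        gcongr
        exact Real.add_one_le_exp _

theorem sum_Oseq_mul_pow_le (hc : ∀ p ≤ k, c p = 0 ∨ c p = 1) (n : ℕ) {z : ℝ} (hz : 1 ≤ z) :
    ∑ m ∈ range (n + 2), (Oseq k c (n + 1) m : ℝ) * z ^ m ≤
      ((n + 1).factorial : ℝ) ^ k * Real.exp ((z - 1) * ∑ i ∈ range n, Fc k c (i + 2)) *
        z ^ c k := by
  have hfirst :
      ∑ p ∈ range (k + 1), (k.choose p : ℝ) * ((0 : ℕ) : ℝ) ^ (k - p) * z ^ c p = z ^ c k := by
    rw [sum_range_succ, sum_eq_zero fun p hp => ?_]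
    · simp
    · simp [Nat.sub_ne_zero_of_lt (mem_range.1 hp)]
  rw [sum_Oseq_mul_pow hc, prod_range_succ', hfirst]
  gcongr
  calc _ ≤ ∏ i ∈ range n,
          (((i + 1 : ℕ) : ℝ) + 1) ^ k * Real.exp ((z - 1) * Fc k c (i + 2)) :=
        prod_le_prod (fun i _ => sum_nonneg fun p _ => by positivity)
          fun i _ => sum_choose_mul_pow_mul_pow_le hc i.succ_ne_zero hz
    _ = _ := by
        rw [prod_mul_distrib, prod_pow, ← Real.exp_sum, ← mul_sum,
          ← prod_range_add_one_eq_factorial, prod_range_succ']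
        push_cast
        ring_nf

end Factors

lemma sum_filter_le_exp_neg_mul_sum {ι : Type*} {s : Finset ι} {f : ι → ℝ}
    (hf : ∀ i ∈ s, 0 ≤ f i) (X : ι → ℝ) (t : ℝ) {r : ℝ} (hr : 0 ≤ r) :
    ∑ i ∈ s with t ≤ X i, f i ≤ Real.exp (-(r * t)) * ∑ i ∈ s, f i * Real.exp (r * X i) := by
  rw [sum_filter, mul_sum]
  refine sum_le_sum fun i hi => ?_
  split_ifs with ht
  · have hexp : 1 ≤ Real.exp (-(r * t) + r * X i) :=
      Real.one_le_exp (by linarith [mul_le_mul_of_nonneg_left ht hr])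
    calc f i ≤ f i * Real.exp (-(r * t) + r * X i) := le_mul_of_one_le_right (hf i hi) hexp
      _ = _ := by rw [Real.exp_add]; ring
  · exact mul_nonneg (Real.exp_nonneg _) (mul_nonneg (hf i hi) (Real.exp_nonneg _))

theorem sum_Oseq_tail_le {k : ℕ} {c : ℕ → ℕ} (hc : ∀ p ≤ k, c p = 0 ∨ c p = 1) (n : ℕ) (t : ℝ)
    {r : ℝ} (hr : 0 ≤ r) :
    ∑ m ∈ range (n + 2) with t + c k ≤ ((m : ℕ) : ℝ), (Oseq k c (n + 1) m : ℝ) ≤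
      Real.exp ((Real.exp r - 1) * ∑ i ∈ range n, Fc k c (i + 2) - r * t) *
        ((n + 1).factorial : ℝ) ^ k := by
  set S := (Real.exp r - 1) * ∑ i ∈ range n, Fc k c (i + 2)
  have hpow (m : ℕ) : Real.exp (r * m) = Real.exp r ^ m := by
    rw [mul_comm, Real.exp_nat_mul]
  calc _ ≤ Real.exp (-(r * (t + c k))) *
          ∑ m ∈ range (n + 2), (Oseq k c (n + 1) m : ℝ) * Real.exp (r * m) :=
        sum_filter_le_exp_neg_mul_sum (fun _ _ => Nat.cast_nonneg _) _ _ hr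
    _ ≤ Real.exp (-(r * (t + c k))) *
          (((n + 1).factorial : ℝ) ^ k * Real.exp S * Real.exp (r * c k)) := by
        gcongr
        simpa only [hpow] using sum_Oseq_mul_pow_le hc n (Real.one_le_exp hr)
    _ = Real.exp (-(r * (t + c k)) + S + r * c k) * ((n + 1).factorial : ℝ) ^ k := by
        rw [Real.exp_add, Real.exp_add]
        ring
    _ = _ := by
        congr 2
        ring

section SumFc

variable {k : ℕ} {c : ℕ → ℕ}

lemma Fc_succ_le (hk : 1 ≤ k) (hc0 : c 0 = 0) {j : ℕ} (hj : 1 ≤ j) :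
    Fc k c (j + 1) ≤ k * c 1 * (j : ℝ)⁻¹ +
      (∑ p ∈ Icc 2 k, (c p : ℝ) * (k.choose p : ℝ)) * (1 / (j : ℝ) ^ 2) := by
  rw [Fc, range_eq_Ico, sum_eq_sum_Ico_succ_bot (by lia), sum_eq_sum_Ico_succ_bot (by lia),
    Ico_add_one_right_eq_Icc, sum_mul]
  have hlow : (c 0 : ℝ) * (k.choose 0 : ℝ) / ((j + 1 - 1 : ℕ) : ℝ) ^ 0 = 0 := by simp [hc0]
  have hlin : (c (0 + 1) : ℝ) * (k.choose (0 + 1) : ℝ) / ((j + 1 - 1 : ℕ) : ℝ) ^ (0 + 1) =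
      k * c 1 * (j : ℝ)⁻¹ := by
    simp
    ring
  rw [hlow, hlin, zero_add]
  gcongr with p hp
  rw [div_eq_mul_one_div, Nat.add_sub_cancel]
  gcongr
  · exact_mod_cast hj
  · exact (mem_Icc.1 hp).1

lemma sum_range_inv_succ_le_log_add_one (n : ℕ) :
    ∑ i ∈ range n, ((i + 1 : ℕ) : ℝ)⁻¹ ≤ Real.log n + 1 := by
  simpa [harmonic, add_comm] using harmonic_le_one_add_log n

lemma sum_range_one_div_succ_sq_le (n : ℕ) :
    ∑ i ∈ range n, 1 / ((i + 1 : ℕ) : ℝ) ^ 2 ≤ Real.pi ^ 2 / 6 := by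
  have h := sum_le_hasSum (range (n + 1)) (fun i _ => by positivity) hasSum_zeta_two
  simpa [sum_range_succ'] using h

theorem sum_Fc_le (hk : 1 ≤ k) (hc0 : c 0 = 0) (n : ℕ) :
    ∑ i ∈ range n, Fc k c (i + 2) ≤ k * c 1 * (Real.log n + 1) +
      (Real.pi ^ 2 / 6) * ∑ p ∈ Icc 2 k, (c p : ℝ) * (k.choose p : ℝ) := by
  refine (sum_le_sum fun i _ => Fc_succ_le hk hc0 (Nat.le_add_left 1 i)).trans ?_
  rw [sum_add_distrib, ← mul_sum, ← mul_sum, mul_comm (Real.pi ^ 2 / 6)]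
  gcongr
  · exact sum_range_inv_succ_le_log_add_one n
  · exact sum_range_one_div_succ_sq_le n

end SumFc

/-- Theorem 2.4 (concentration): for `c_0 = 0`,
`∑_{m > M + c_k - 1} O_C(n, m) ≤ e^{-M_1} (n!)^k`. -/
theorem stmt_12 (k : ℕ) (hk : 1 ≤ k) (c : ℕ → ℕ) (hc : ∀ p ≤ k, c p = 0 ∨ c p = 1)
    (hc0 : c 0 = 0) (n : ℕ) (hn : 2 ≤ n) (M1 : ℤ) (hM1 : 1 ≤ M1) (M : ℤ)
    (hM : M = ⌈Real.exp 1 * k * c 1 * (Real.log ((n : ℝ) - 1) + 1) +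
          Real.exp 1 * (Real.pi ^ 2 / 6) *
            ∑ p ∈ Finset.Icc 2 k, (c p : ℝ) * (k.choose p : ℝ)⌉ + M1) :
    ∑ m ∈ (Finset.range (n + 1)).filter (fun m : ℕ => M + (c k : ℤ) - 1 < (m : ℤ)),
        (Oseq k c n m : ℝ) ≤
      Real.exp (-(M1 : ℝ)) * ((n.factorial : ℝ)) ^ k := by
  obtain ⟨N, rfl⟩ : ∃ N, n = N + 1 := ⟨n - 1, by lia⟩
  set S := ∑ i ∈ range N, Fc k c (i + 2)
  have hS_le_M : (Real.exp 1 - 1) * S - M ≤ -M1 := by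
    have hS : 0 ≤ S := sum_nonneg fun i _ => Fc_nonneg k c (i + 2)
    have hbound := mul_le_mul_of_nonneg_left (sum_Fc_le hk hc0 N) (Real.exp_pos 1).le
    rw [hM, Nat.cast_add_one, add_sub_cancel_right]
    push_cast
    linarith [Int.le_ceil (Real.exp 1 * k * c 1 * (Real.log N + 1) + Real.exp 1 *
      (Real.pi ^ 2 / 6) * ∑ p ∈ Icc 2 k, (c p : ℝ) * (k.choose p : ℝ))]
  have hthreshold (m : ℕ) : M + (c k : ℤ) - 1 < m ↔ (M : ℝ) + c k ≤ m := by
    rw [Int.sub_one_lt_iff]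
    exact_mod_cast Iff.rfl
  simp only [hthreshold]
  calc _ ≤ Real.exp ((Real.exp 1 - 1) * S - M) * ((N + 1).factorial : ℝ) ^ k := by
        simpa only [one_mul] using sum_Oseq_tail_le hc N M zero_le_one
    _ ≤ _ := by gcongr
end

section
/- Fix an integer k ≥ 1 and C = (c_0,…,c_k) with each c_p ∈ {0,1}, and let λ = Σ_{j=2}^{n} F_j(C). For every n ≥ 1, (1/(n!)^k) · Σ_{m=1}^{n} (((n−1)!)^k / (m−1)!) · λ^{m−1} · Π_{i=1}^{n−m} F_{i+1}(C′) ≤ e^{λ}. -/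
open Finset

/-!
Deleting weights from the binomial expansion of `(1 + 1 / i) ^ k` only decreases it, so
`F_{i+1}(C') ≤ ((i + 1) / i) ^ k`. The product of these bounds telescopes to
`(n - m + 1) ^ k ≤ n ^ k`, which is exactly what `((n - 1)! / n!) ^ k` cancels; what remains is a
partial sum of the exponential series at `λ`.
-/

section BinomInvSum

variable {K : Type*} [Field K]

/-- The sum `∑_{p=0}^k w_p · binom(k,p) / x^p`, extending `F_j(C)` to arbitrary weights `w` in a
field. The argument is `x = j - 1`, so that no subtraction is needed. -/
def binomInvSum (k : ℕ) (w : ℕ → K) (x : K) : K :=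
  ∑ p ∈ range (k + 1), w p * (k.choose p : K) / x ^ p

variable [LinearOrder K] [IsStrictOrderedRing K] {k : ℕ} {w : ℕ → K} {x : K}

lemma binomInvSum_nonneg (hw : ∀ p ≤ k, 0 ≤ w p) (hx : 0 ≤ x) : 0 ≤ binomInvSum k w x :=
  sum_nonneg fun p hp ↦ by
    have := hw p (mem_range_succ_iff.mp hp)
    positivity

lemma binomInvSum_le_one_add_inv_pow (hw : ∀ p ≤ k, w p ≤ 1) (hx : 0 ≤ x) :
    binomInvSum k w x ≤ (1 + x⁻¹) ^ k :=
  calc binomInvSum k w x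
    _ ≤ ∑ p ∈ range (k + 1), 1 * (k.choose p : K) / x ^ p := by
      unfold binomInvSum
      gcongr with p hp
      exact hw p (mem_range_succ_iff.mp hp)
    _ = (1 + x⁻¹) ^ k := by
      rw [add_comm 1 x⁻¹, add_pow]
      refine sum_congr rfl fun p _ ↦ ?_
      rw [one_pow, mul_one, one_mul, inv_pow, div_eq_inv_mul]

lemma prod_Icc_one_add_inv (n : ℕ) : ∏ i ∈ Icc 1 n, (1 + (i : K)⁻¹) = n + 1 := by
  induction n with
  | zero => simp
  | succ n ih =>
    rw [prod_Icc_succ_top (by lia), ih]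
    push_cast
    field_simp

lemma prod_binomInvSum_le (hw : ∀ p ≤ k, w p ∈ Set.Icc 0 1) (n : ℕ) :
    ∏ i ∈ Icc 1 n, binomInvSum k w (i : K) ≤ ((n : K) + 1) ^ k :=
  calc ∏ i ∈ Icc 1 n, binomInvSum k w (i : K)
    _ ≤ ∏ i ∈ Icc 1 n, (1 + (i : K)⁻¹) ^ k :=
      prod_le_prod (fun i _ ↦ binomInvSum_nonneg (fun p hp ↦ (hw p hp).1) i.cast_nonneg)
        fun i _ ↦ binomInvSum_le_one_add_inv_pow (fun p hp ↦ (hw p hp).2) i.cast_nonneg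
    _ = ((n : K) + 1) ^ k := by rw [prod_pow, prod_Icc_one_add_inv]

end BinomInvSum

lemma sum_Icc_pow_div_factorial_le_exp {x : ℝ} (hx : 0 ≤ x) (n : ℕ) :
    ∑ m ∈ Icc 1 n, x ^ (m - 1) / ((m - 1).factorial : ℝ) ≤ Real.exp x := by
  have shift : ∑ m ∈ Icc 1 n, x ^ (m - 1) / ((m - 1).factorial : ℝ) =
      ∑ i ∈ range n, x ^ i / (i.factorial : ℝ) := by
    rw [← Ico_add_one_right_eq_Icc, sum_Ico_eq_sum_range]
    simp only [add_tsub_cancel_right, add_tsub_cancel_left]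
  exact shift.trans_le (Real.sum_le_exp_of_nonneg hx n)

theorem stmt_14_general (k n : ℕ) {x : ℝ} (hx : 0 ≤ x) {w : ℕ → ℝ}
    (hw : ∀ p ≤ k, w p ∈ Set.Icc 0 1) :
    (1 / (n.factorial : ℝ) ^ k) *
        ∑ m ∈ Icc 1 n,
          ((n - 1).factorial : ℝ) ^ k / ((m - 1).factorial : ℝ) * x ^ (m - 1) *
            ∏ i ∈ Icc 1 (n - m), binomInvSum k w i ≤
      Real.exp x := by
  refine le_trans ?_ (sum_Icc_pow_div_factorial_le_exp hx n)
  rw [mul_sum]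
  refine sum_le_sum fun m hm ↦ ?_
  obtain ⟨one_le_m, m_le_n⟩ := mem_Icc.mp hm
  have n_ne_zero : n ≠ 0 := by lia
  have prod_le : ∏ i ∈ Icc 1 (n - m), binomInvSum k w (i : ℝ) ≤ (n : ℝ) ^ k := by
    refine (prod_binomInvSum_le hw (n - m)).trans ?_
    gcongr
    exact_mod_cast (by lia : n - m + 1 ≤ n)
  calc 1 / (n.factorial : ℝ) ^ k *
        (((n - 1).factorial : ℝ) ^ k / ((m - 1).factorial : ℝ) * x ^ (m - 1) *
          ∏ i ∈ Icc 1 (n - m), binomInvSum k w (i : ℝ))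
    _ ≤ 1 / (n.factorial : ℝ) ^ k *
        (((n - 1).factorial : ℝ) ^ k / ((m - 1).factorial : ℝ) * x ^ (m - 1) * (n : ℝ) ^ k) := by
      gcongr
    _ = x ^ (m - 1) / ((m - 1).factorial : ℝ) := by
      rw [← Nat.mul_factorial_pred n_ne_zero, Nat.cast_mul, mul_pow]
      field_simp

lemma Fc_eq_binomInvSum (k : ℕ) (c : ℕ → ℕ) (j : ℕ) :
    Fc k c j = binomInvSum k (fun p ↦ (c p : ℝ)) ((j - 1 : ℕ) : ℝ) :=
  rfl

/-- Theorem 2.5 (ratio bound):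
`(1/(n!)^k) ∑_{m=1}^n ((n-1)!)^k/(m-1)! · λ^{m-1} · ∏_{i=1}^{n-m} F_{i+1}(C') ≤ e^λ`. -/
theorem stmt_14 (k : ℕ) (hk : 1 ≤ k) (c : ℕ → ℕ) (hc : ∀ p ≤ k, c p = 0 ∨ c p = 1)
    (n : ℕ) (hn : 1 ≤ n) :
    (1 / ((n.factorial : ℝ)) ^ k) *
        ∑ m ∈ Finset.Icc 1 n,
          ((n - 1).factorial : ℝ) ^ k / ((m - 1).factorial : ℝ) *
            (∑ j ∈ Finset.Icc 2 n, Fc k c j) ^ (m - 1) *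
            ∏ i ∈ Finset.Icc 1 (n - m), Fc k (fun p => 1 - c p) (i + 1) ≤
      Real.exp (∑ j ∈ Finset.Icc 2 n, Fc k c j) := by
  simpa only [Fc_eq_binomInvSum k fun p ↦ 1 - c p, add_tsub_cancel_right] using
    stmt_14_general k n (sum_nonneg fun j _ ↦ Fc_nonneg k c j)
      (w := fun p ↦ ((1 - c p : ℕ) : ℝ)) fun p _ ↦ ⟨Nat.cast_nonneg _, mod_cast tsub_le_self⟩
end
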